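/- arXiv:2010.13725 — 2 statements merged into one kernel-verified Lean document; each statement's English description precedes it below -/
import Mathlib

section
/- Fix an integer N_r ≥ 2 and a real number p with 0 < p ≤ 1. For every p' ∈ [0,1], π₁(p, p', N_r) ≤ π₁(p, 1, N_r); that is, the steady-state collision probability is maximized over p' ∈ [0,1] at p' = 1 (equivalently, the packet reception ratio PRR = 1 − π₁ is minimized at p' = 1). -/
/-!
After clearing the inner division, `π₁ = p' / (a + b * p')` with `a = (N - 1) * p` and
`b = N * (1 - p)`. Cross-multiplying, the terms in `b` cancel, so as long as the denominators are
positive this quotient is strictly increasing in `p'` because `a > 0`, whatever the sign of `b`.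
On `[0, 1]` the denominator interpolates linearly between `(N - 1) * p` and `N - p`.
-/

section

variable {K : Type*} [Field K]

/-- The steady-state collision probability `π₁(p, p', N)`, as a function of the number `N` of
resource blocks, the target's reselection probability `p` and, last so that it can be left as the
variable, the attacker's reselection probability `p'`. The number `N` ranges over the whole
field, and the formula is meaningful only where its denominators are nonzero. -/
def collisionProb (N p p' : K) : K :=
  p' / ((N - 1) * (p + p' * (1 - p) + (p' * (1 - p)) / (N - 1)))

theorem collisionProb_eq_div_add_mul {N : K} (hN : N - 1 ≠ 0) (p p' : K) :
    collisionProb N p p' = p' / ((N - 1) * p + N * (1 - p) * p') := by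
  have clear_inner_div : (N - 1) * (p + p' * (1 - p) + (p' * (1 - p)) / (N - 1)) =
      (N - 1) * p + N * (1 - p) * p' := by
    rw [mul_add, mul_div_cancel₀ _ hN]
    ring
  rw [collisionProb, clear_inner_div]

variable [LinearOrder K] [IsStrictOrderedRing K]

theorem strictMonoOn_div_add_mul {a : K} (ha : 0 < a) (b : K) :
    StrictMonoOn (fun x ↦ x / (a + b * x)) {x | 0 < a + b * x} := by
  intro x hx y hy hxy
  refine (div_lt_div_iff₀ hx hy).2 ?_
  calc
    x * (a + b * y) = a * x + b * x * y := by ring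
    _ < a * y + b * x * y := by gcongr
    _ = y * (a + b * x) := by ring

theorem add_mul_pos_of_mem_Icc {a b x : K} (ha : 0 < a) (hab : 0 < a + b)
    (hx : x ∈ Set.Icc 0 1) : 0 < a + b * x := by
  have combo_pos : 0 < (1 - x) • a + x • (a + b) :=
    convex_Ioi (0 : K) ha hab (sub_nonneg.2 hx.2) hx.1 (sub_add_cancel 1 x)
  calc
    0 < (1 - x) • a + x • (a + b) := combo_pos
    _ = a + b * x := by simp only [smul_eq_mul]; ring

theorem stmt_3_general {N p : K} (hN : 1 < N) (hp : 0 < p) (hpN : p < N) :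
    StrictMonoOn (collisionProb N p) (Set.Icc 0 1) := by
  have hN1 : 0 < N - 1 := sub_pos.2 hN
  have at_zero_pos : 0 < (N - 1) * p := mul_pos hN1 hp
  have at_one_pos : 0 < (N - 1) * p + N * (1 - p) := by linarith
  have denom_pos : Set.Icc 0 1 ⊆ {x | 0 < (N - 1) * p + N * (1 - p) * x} :=
    fun _ ↦ add_mul_pos_of_mem_Icc at_zero_pos at_one_pos
  rw [funext (collisionProb_eq_div_add_mul hN1.ne' p)]
  exact (strictMonoOn_div_add_mul at_zero_pos _).mono denom_pos

end

theorem stmt_3 (Nr : ℕ) (hNr : 2 ≤ Nr) (p : ℝ) (hp : 0 < p) (hp1 : p ≤ 1) :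
    ∀ p' ∈ Set.Icc (0:ℝ) 1,
      p' / (((Nr : ℝ) - 1) * (p + p' * (1 - p) + (p' * (1 - p)) / ((Nr : ℝ) - 1))) ≤
      1 / (((Nr : ℝ) - 1) * (p + 1 * (1 - p) + (1 * (1 - p)) / ((Nr : ℝ) - 1))) := by
  intro p' hp'
  have hN : (1 : ℝ) < Nr := Nat.one_lt_cast.2 hNr
  exact (stmt_3_general hN hp (hp1.trans_lt hN)).monotoneOn hp' unitInterval.one_mem hp'.2
end

section
/- Fix an integer N_r ≥ 2 and real numbers p, p' ∈ [0,1] with p + p' > 0. Let π₁ = p' / ((N_r − 1) · (p + p'·(1 − p) + (p'·(1 − p))/(N_r − 1))) and π₀ = 1 − π₁. Then the row vector (π₀, π₁) is a stationary distribution of the 2×2 matrix M with entries M₀₀ = 1 − p'/(N_r − 1), M₀₁ = p'/(N_r − 1), M₁₀ = 1 − (1 − p)·(1 − p') − p·p'/(N_r − 1), M₁₁ = (1 − p)·(1 − p') + p·p'/(N_r − 1); that is, π₀·M₀₀ + π₁·M₁₀ = π₀ and π₀·M₀₁ + π₁·M₁₁ = π₁. -/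
/-!
A row vector `(x, y)` is stationary for the two-state chain with exit probabilities `a` and `b`
exactly when the flows `x * a` and `y * b` between the states agree, so that
`y = a / (a + b)` when `x + y = 1`. In the jamming chain `a = p' / (N_r - 1)` and `1 - b = M₁₁`,
whence `a + b = p + p' * (1 - p) + p' * (1 - p) / (N_r - 1)`.
-/

open Matrix

/-- Transition matrix of the chain on two states that leaves state `0` with probability `a` and
state `1` with probability `b`. Rows are indexed by the current state, so distributions act as row
vectors from the left. -/
def twoStateMatrix {R : Type*} [Ring R] (a b : R) : Matrix (Fin 2) (Fin 2) R :=
  !![1 - a, a; b, 1 - b]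

theorem vecMul_fin_two_eq_iff {R : Type*} [NonUnitalNonAssocSemiring R]
    {M : Matrix (Fin 2) (Fin 2) R} {x y u v : R} :
    ![x, y] ᵥ* M = ![u, v] ↔ x * M 0 0 + y * M 1 0 = u ∧ x * M 0 1 + y * M 1 1 = v := by
  simp [funext_iff, vecMul, dotProduct]

theorem vecMul_twoStateMatrix_eq_self_iff {R : Type*} [CommRing R] {a b x y : R} :
    ![x, y] ᵥ* twoStateMatrix a b = ![x, y] ↔ x * a = y * b := by
  simp only [twoStateMatrix, vecMul_fin_two_eq_iff, of_apply, cons_val', cons_val_zero,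
    cons_val_one, cons_val_fin_one]
  constructor
  · rintro ⟨-, h⟩
    linear_combination h
  · intro h
    exact ⟨by linear_combination -h, by linear_combination h⟩

theorem vecMul_twoStateMatrix_eq_self {K : Type*} [Field K] {a b : K} (hab : a + b ≠ 0) :
    ![1 - a / (a + b), a / (a + b)] ᵥ* twoStateMatrix a b =
      ![1 - a / (a + b), a / (a + b)] := by
  rw [vecMul_twoStateMatrix_eq_self_iff, one_sub_div hab, add_sub_cancel_left]
  ring

theorem add_mul_one_sub_pos {R : Type*} [Ring R] [PartialOrder R] [IsOrderedRing R] {p q : R}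
    (hp : p ∈ Set.Icc 0 1) (hq : 0 ≤ q) (hpq : 0 < p + q) : 0 < p + q * (1 - p) := by
  obtain rfl | hp_pos := hp.1.eq_or_lt
  · simpa using hpq
  · exact add_pos_of_pos_of_nonneg hp_pos (mul_nonneg hq (sub_nonneg.2 hp.2))

theorem stationary_denominator_pos {K : Type*} [Field K] [LinearOrder K] [IsStrictOrderedRing K]
    {n p q : K} (hn : 0 < n) (hp : p ∈ Set.Icc 0 1) (hq : 0 ≤ q) (hpq : 0 < p + q) :
    0 < n * (p + q * (1 - p) + q * (1 - p) / n) :=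
  mul_pos hn <| add_pos_of_pos_of_nonneg (add_mul_one_sub_pos hp hq hpq) <|
    div_nonneg (mul_nonneg hq (sub_nonneg.2 hp.2)) hn.le

theorem stmt_10_general {K : Type*} [Field K] {N p p' π₁ π₀ : K} {M : Matrix (Fin 2) (Fin 2) K}
    (hD : (N - 1) * (p + p' * (1 - p) + (p' * (1 - p)) / (N - 1)) ≠ 0)
    (hπ₁ : π₁ = p' / ((N - 1) * (p + p' * (1 - p) + (p' * (1 - p)) / (N - 1))))
    (hπ₀ : π₀ = 1 - π₁)
    (hM : M = !![1 - p' / (N - 1), p' / (N - 1);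
                 1 - (1 - p) * (1 - p') - p * p' / (N - 1),
                 (1 - p) * (1 - p') + p * p' / (N - 1)]) :
    π₀ * M 0 0 + π₁ * M 1 0 = π₀ ∧ π₀ * M 0 1 + π₁ * M 1 1 = π₁ := by
  set a := p' / (N - 1) with ha
  set b := 1 - (1 - p) * (1 - p') - p * p' / (N - 1)
  have h_sum : p + p' * (1 - p) + p' * (1 - p) / (N - 1) = a + b := by ring
  have hab : a + b ≠ 0 := h_sum ▸ right_ne_zero_of_mul hD
  have h_stay : (1 - p) * (1 - p') + p * p' / (N - 1) = 1 - b := by ring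
  rw [h_sum, ← div_div, ← ha] at hπ₁
  replace hM : M = twoStateMatrix a b := by rw [hM, h_stay, twoStateMatrix]
  rw [← vecMul_fin_two_eq_iff, hM, hπ₀, hπ₁]
  exact vecMul_twoStateMatrix_eq_self hab

theorem stmt_10 (Nr : ℕ) (hNr : 2 ≤ Nr) (p p' : ℝ)
    (hp : p ∈ Set.Icc (0:ℝ) 1) (hp' : p' ∈ Set.Icc (0:ℝ) 1) (hpos : 0 < p + p')
    (π₁ π₀ : ℝ)
    (hπ₁ : π₁ = p' / (((Nr : ℝ) - 1) * (p + p' * (1 - p) + (p' * (1 - p)) / ((Nr : ℝ) - 1))))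
    (hπ₀ : π₀ = 1 - π₁)
    (M : Matrix (Fin 2) (Fin 2) ℝ)
    (hM : M = !![1 - p' / ((Nr : ℝ) - 1), p' / ((Nr : ℝ) - 1);
                 1 - (1 - p) * (1 - p') - p * p' / ((Nr : ℝ) - 1),
                 (1 - p) * (1 - p') + p * p' / ((Nr : ℝ) - 1)]) :
    π₀ * M 0 0 + π₁ * M 1 0 = π₀ ∧ π₀ * M 0 1 + π₁ * M 1 1 = π₁ :=
  stmt_10_general (stationary_denominator_pos (sub_pos.2 (Nat.one_lt_cast.2 hNr)) hp hp'.1 hpos).ne'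
    hπ₁ hπ₀ hM
end
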